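/- Let t ≥ 2, let F be the set of all nonzero vectors of (Fin t → ZMod 2), so that the decision graph D(F) is the complete graph on the 2^t vectors of (Fin t → ZMod 2). Let G be a finite connected simple graph with designated vertex v₀, and let φ, ψ : G → D(F) be graph homomorphisms with φ(v₀) = ψ(v₀) = 0. Then τ_φ and τ_ψ (where τ_φ(𝟙_u + 𝟙_v) = φ(u) + φ(v)) are joined by a walk in the recolouring graph mCol(E_G, F) if and only if φ and ψ are joined by a sequence of graph homomorphisms G → D(F) in which consecutive terms are equal or Kempe-adjacent. -/

import Mathlib

/-- A circuit of a binary matroid with point set `E`: a minimal nonempty subset summing to 0. -/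
def IsCircuit {P : Type*} [AddCommGroup P] (E Z : Finset P) : Prop :=
  Z ⊆ E ∧ Z.Nonempty ∧ ∑ e ∈ Z, e = 0 ∧
    ∀ Z' ⊆ Z, Z'.Nonempty → ∑ e ∈ Z', e = 0 → Z' = Z

/-- A cocircuit: a minimal nonempty subset meeting every circuit evenly. -/
def IsCocircuit {P : Type*} [AddCommGroup P] [DecidableEq P] (E C : Finset P) : Prop :=
  C ⊆ E ∧ C.Nonempty ∧ (∀ Z, IsCircuit E Z → Even (C ∩ Z).card) ∧
    ∀ C' ⊆ C, C'.Nonempty → (∀ Z, IsCircuit E Z → Even (C' ∩ Z).card) → C' = C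

/-- A matroid homomorphism from the matroid on `E` to the matroid on `F`. -/
def IsMHom {P Q : Type*} [AddCommGroup P] [AddCommGroup Q]
    (E : Finset P) (F : Finset Q) (τ : P → Q) : Prop :=
  (∀ e ∈ E, τ e ∈ F) ∧ ∀ Z, IsCircuit E Z → ∑ e ∈ Z, τ e = 0

/-- Adjacency in the recolouring graph: the maps differ exactly on a cocircuit. -/
def MAdj {P Q : Type*} [AddCommGroup P] [AddCommGroup Q] [DecidableEq P]
    (E : Finset P) (τ τ' : P → Q) : Prop :=
  ∃ C, IsCocircuit E C ∧ ∀ e ∈ E, (τ e ≠ τ' e ↔ e ∈ C)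

/-- One step of a walk in `mCol(E,F)`: both maps are homomorphisms and they are
equal (as maps on `E`) or adjacent. -/
def MStep {P Q : Type*} [AddCommGroup P] [AddCommGroup Q] [DecidableEq P]
    (E : Finset P) (F : Finset Q) (τ τ' : P → Q) : Prop :=
  IsMHom E F τ ∧ IsMHom E F τ' ∧ ((∀ e ∈ E, τ e = τ' e) ∨ MAdj E τ τ')

/-- Joined by a walk in the recolouring graph `mCol(E,F)`. -/
def MWalk {P Q : Type*} [AddCommGroup P] [AddCommGroup Q] [DecidableEq P]
    (E : Finset P) (F : Finset Q) : (P → Q) → (P → Q) → Prop :=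
  Relation.ReflTransGen (MStep E F)

/-- The indicator vector of a vertex. -/
def ind {V : Type*} [DecidableEq V] (u : V) : V → ZMod 2 := Pi.single u 1

/-- The decision graph of a set `F` of nonzero vectors. -/
def decisionGraph {m : ℕ} (F : Finset (Fin m → ZMod 2)) : SimpleGraph (Fin m → ZMod 2) where
  Adj v w := v + w ∈ F ∧ v ≠ w
  symm := by
    constructor
    intro v w h
    exact ⟨by rw [add_comm]; exact h.1, h.2.symm⟩
  loopless := by
    constructor
    intro v h
    exact h.2 rfl

/-- The weight of a vector: its number of nonzero coordinates. -/
def wt {n : ℕ} (e : Fin n → ZMod 2) : ℕ := (Finset.univ.filter fun i => e i ≠ 0).card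


/-- Kempe adjacency of two homomorphisms to a decision graph:
`ψ` is obtained from `φ` by adding `b` on the vertex set `U` of a connected
component of the subgraph induced on the vertices coloured `b'` or `b' + b`. -/
def KempeAdj {V : Type*} {m : ℕ} {G : SimpleGraph V} {F : Finset (Fin m → ZMod 2)}
    (φ ψ : G →g decisionGraph F) : Prop :=
  ∃ (b b' : Fin m → ZMod 2) (U : Set V),
    (∃ c : (G.induce {u | φ u = b' ∨ φ u = b' + b}).ConnectedComponent,
      U = Subtype.val '' {x | (G.induce {u | φ u = b' ∨ φ u = b' + b}).connectedComponentMk x = c}) ∧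
    (∀ u ∈ U, ψ u = φ u + b) ∧ (∀ u ∉ U, ψ u = φ u)

/-!
Both recolouring relations are generated by one and the same move: adding a fixed vector `b` on a
set.

If two matroid homomorphisms differ exactly on a cocircuit `C`, their difference `σ` is constant on
`C`: for each linear functional `f` the support of `f ∘ σ` is a cocycle inside `C`, hence empty or
all of `C`. Conversely, adding `b` on an arbitrary cocycle can be done one cocircuit at a time. The
cocycles of the graphic matroid are the cuts of `G`, because a function which sums to zero over
circuits extends to a linear functional on `V → ZMod 2`; so adding `b` on a cocycle amounts to
adding `b` to the colours on one side of a cut. When every nonzero vector lies in `F`, adding `b` on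
a vertex set `U` keeps a colouring proper iff `U` is closed under passing from a vertex `x` to a
neighbour coloured `φ x + b`, that is, iff `U` is a union of Kempe chains, which can be swapped one
after the other.
-/

section Circuits

variable {P Q : Type*} [AddCommGroup P] [AddCommGroup Q] {E Z : Finset P}

theorem IsCircuit.sum_map_eq_zero {H : Type*} [FunLike H P Q] [AddMonoidHomClass H P Q]
    (hZ : IsCircuit E Z) (T : H) : ∑ e ∈ Z, T e = 0 := by
  rw [← map_sum, hZ.2.2.1, map_zero]

theorem exists_isCircuit_subset (hZE : Z ⊆ E) (hne : Z.Nonempty) (hZ : ∑ e ∈ Z, e = 0) :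
    ∃ C ⊆ Z, IsCircuit E C := by
  obtain ⟨C, hCZ, hC⟩ := exists_minimal_le_of_wellFoundedLT
    (fun C : Finset P => C.Nonempty ∧ ∑ e ∈ C, e = 0) Z ⟨hne, hZ⟩
  exact ⟨C, hCZ, hCZ.trans hZE, hC.1.1, hC.1.2,
    fun C' hC' hne' hsum => hC'.antisymm (hC.2 ⟨hne', hsum⟩ hC')⟩

theorem sum_eq_zero_of_forall_isCircuit {τ : P → Q}
    (hτ : ∀ Z, IsCircuit E Z → ∑ e ∈ Z, τ e = 0) (hZE : Z ⊆ E) (hZ : ∑ e ∈ Z, e = 0) :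
    ∑ e ∈ Z, τ e = 0 := by
  classical
  induction Z using Finset.strongInduction with
  | H Z ih =>
    rcases Z.eq_empty_or_nonempty with rfl | hne
    · exact Finset.sum_empty
    obtain ⟨C, hCZ, hC⟩ := exists_isCircuit_subset hZE hne hZ
    have hsdiff : ∑ e ∈ Z \ C, e = 0 := by
      rwa [← Finset.sum_sdiff hCZ, hC.2.2.1, add_zero] at hZ
    rw [← Finset.sum_sdiff hCZ, hτ C hC, add_zero]
    exact ih _ (Finset.sdiff_ssubset hCZ hC.2.1) (Finset.sdiff_subset.trans hZE) hsdiff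

end Circuits

section LinearExtension

theorem exists_linearMap_comp_eq_of_ker_le {K M N N' : Type*} [Field K] [AddCommGroup M]
    [AddCommGroup N] [AddCommGroup N'] [Module K M] [Module K N] [Module K N']
    {f : M →ₗ[K] N} {g : M →ₗ[K] N'} (h : f.ker ≤ g.ker) : ∃ T : N →ₗ[K] N', T ∘ₗ f = g := by
  obtain ⟨T, hT⟩ := LinearMap.exists_extend
    (f.ker.liftQ g h ∘ₗ f.quotKerEquivRange.symm.toLinearMap)
  refine ⟨T, LinearMap.ext fun x => ?_⟩
  have hTx := LinearMap.congr_fun hT ⟨f x, x, rfl⟩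
  have hx : f.quotKerEquivRange.symm ⟨f x, x, rfl⟩ = Submodule.Quotient.mk x :=
    f.quotKerEquivRange_symm_apply_image x _
  simpa [hx] using hTx

theorem zmod_two_smul_eq_ite {Q : Type*} [AddCommGroup Q] [Module (ZMod 2) Q] (a : ZMod 2)
    (x : Q) : a • x = if a ≠ 0 then x else 0 := by
  obtain rfl | rfl : a = 0 ∨ a = 1 := by decide +revert
  all_goals simp

variable {P Q : Type*} [AddCommGroup P] [AddCommGroup Q] [Module (ZMod 2) P] [Module (ZMod 2) Q]

theorem exists_linearMap_eq_of_forall_isCircuit {E : Finset P} {τ : P → Q}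
    (hτ : ∀ Z, IsCircuit E Z → ∑ e ∈ Z, τ e = 0) :
    ∃ T : P →ₗ[ZMod 2] Q, ∀ e ∈ E, T e = τ e := by
  classical
  let f := Fintype.linearCombination (ZMod 2) fun e : E => (e : P)
  let g := Fintype.linearCombination (ZMod 2) fun e : E => τ e
  have hker : f.ker ≤ g.ker := by
    intro c hc
    let Z : Finset P := (Finset.univ.filter fun e => c e ≠ 0).map (Function.Embedding.subtype _)
    have hZE : Z ⊆ E := fun e he => Finset.property_of_mem_map_subtype _ he
    have hf : f c = ∑ e ∈ Z, e := by
      simp [f, Z, Fintype.linearCombination_apply, zmod_two_smul_eq_ite, Finset.sum_ite]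
    have hg : g c = ∑ e ∈ Z, τ e := by
      simp [g, Z, Fintype.linearCombination_apply, zmod_two_smul_eq_ite, Finset.sum_ite]
    rw [LinearMap.mem_ker] at hc ⊢
    rw [hg]
    exact sum_eq_zero_of_forall_isCircuit hτ hZE (hf ▸ hc)
  obtain ⟨T, hT⟩ := exists_linearMap_comp_eq_of_ker_le hker
  refine ⟨T, fun e he => ?_⟩
  simpa [f, g] using LinearMap.congr_fun hT (Pi.single ⟨e, he⟩ 1)

end LinearExtension

section Cocycles

/-- A cocycle of the binary matroid on `E`: a set of points, possibly empty, which meets every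
circuit evenly. The cocircuits are the minimal nonempty cocycles. -/
def IsCocycle {P : Type*} [AddCommGroup P] [DecidableEq P] (E C : Finset P) : Prop :=
  C ⊆ E ∧ ∀ Z, IsCircuit E Z → Even (C ∩ Z).card

variable {P Q : Type*} [AddCommGroup P] [DecidableEq P] [AddCommGroup Q] {E C D Z : Finset P}

theorem isCocycle_empty : IsCocycle E ∅ :=
  ⟨Finset.empty_subset E, fun Z _ => by simp⟩

theorem IsCocircuit.isCocycle (hC : IsCocircuit E C) : IsCocycle E C :=
  ⟨hC.1, hC.2.2.1⟩

theorem IsCocycle.sdiff (hD : IsCocycle E D) (hC : IsCocycle E C) (hCD : C ⊆ D) :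
    IsCocycle E (D \ C) := by
  refine ⟨Finset.sdiff_subset.trans hD.1, fun Z hZ => ?_⟩
  have hsub : C ∩ Z ⊆ D ∩ Z := Finset.inter_subset_inter_right hCD
  have hinter : D \ C ∩ Z = (D ∩ Z) \ (C ∩ Z) := by grind
  rw [hinter, Finset.card_sdiff_of_subset hsub, Nat.even_sub (Finset.card_le_card hsub)]
  exact iff_of_true (hD.2 Z hZ) (hC.2 Z hZ)

theorem IsCocycle.exists_isCocircuit_subset (hD : IsCocycle E D) (hne : D.Nonempty) :
    ∃ C ⊆ D, IsCocircuit E C := by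
  obtain ⟨C, hCD, hC⟩ := exists_minimal_le_of_wellFoundedLT
    (fun C : Finset P => C.Nonempty ∧ ∀ Z, IsCircuit E Z → Even (C ∩ Z).card) D ⟨hne, hD.2⟩
  exact ⟨C, hCD, hCD.trans hD.1, hC.1.1, hC.1.2,
    fun C' hC' hne' heven => hC'.antisymm (hC.2 ⟨hne', heven⟩ hC')⟩

theorem isCocycle_filter_ne_zero {f : P → ZMod 2}
    (hf : ∀ Z, IsCircuit E Z → ∑ e ∈ Z, f e = 0) : IsCocycle E {e ∈ E | f e ≠ 0} := by
  refine ⟨Finset.filter_subset _ _, fun Z hZ => ?_⟩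
  have hfilter : {e ∈ E | f e ≠ 0} ∩ Z = {e ∈ Z | f e ≠ 0} := by
    rw [Finset.filter_inter, Finset.inter_eq_right.2 hZ.1]
  have hite : ∀ a : ZMod 2, (if a ≠ 0 then 1 else 0) = a := by decide
  rw [hfilter, ← ZMod.natCast_eq_zero_iff_even, ← Finset.sum_boole]
  simpa only [hite] using hf Z hZ

theorem IsCocycle.sum_indicator_eq_zero [Module (ZMod 2) Q] (hC : IsCocycle E C)
    (hZ : IsCircuit E Z) (b : Q) : ∑ e ∈ Z, (C : Set P).indicator (fun _ => b) e = 0 := by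
  obtain ⟨k, hk⟩ := hC.2 Z hZ
  calc ∑ e ∈ Z, (C : Set P).indicator (fun _ => b) e
      = (C ∩ Z).card • b := by
        simp [Set.indicator_apply, Finset.inter_comm]
    _ = 0 := by rw [hk, add_nsmul, ZModModule.add_self]

theorem IsCocircuit.exists_eq_indicator [Module (ZMod 2) Q] (hC : IsCocircuit E C) {σ : P → Q}
    (hσ : ∀ Z, IsCircuit E Z → ∑ e ∈ Z, σ e = 0) (hσC : ∀ e ∈ E, σ e ≠ 0 → e ∈ C) :
    ∃ b, ∀ e ∈ E, σ e = (C : Set P).indicator (fun _ => b) e := by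
  obtain ⟨e₀, he₀⟩ := hC.2.1
  refine ⟨σ e₀, fun e he => ?_⟩
  by_cases heC : e ∈ C
  swap
  · rw [Set.indicator_of_notMem (by simpa using heC)]
    exact not_imp_comm.1 (hσC e he) heC
  rw [Set.indicator_of_mem (Finset.mem_coe.2 heC), ← sub_eq_zero,
    ← Module.forall_dual_apply_eq_zero_iff (ZMod 2)]
  intro f
  set D : Finset P := {e ∈ E | f (σ e) ≠ 0} with hDdef
  have hD : IsCocycle E D := isCocycle_filter_ne_zero fun Z hZ => by
    rw [← map_sum, hσ Z hZ, map_zero]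
  have hDC : D ⊆ C := fun x hx => by
    obtain ⟨hxE, hfx⟩ := Finset.mem_filter.1 hx
    exact hσC x hxE fun h => hfx (by rw [h, map_zero])
  have hvalue : ∀ x ∈ E, f (σ x) = if x ∈ D then 1 else 0 := fun x hx => by
    have hbool : ∀ a : ZMod 2, a = if a ≠ 0 then 1 else 0 := by decide
    simpa [hDdef, hx] using hbool (f (σ x))
  rw [map_sub, hvalue e he, hvalue e₀ (hC.1 he₀)]
  rcases D.eq_empty_or_nonempty with hempty | hne
  · simp [hempty]
  · simp [hC.2.2.2 D hDC hne hD.2, heC, he₀]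

end Cocycles

section MatroidWalks

variable {P Q : Type*} [AddCommGroup P] [AddCommGroup Q] {E : Finset P} {F : Finset Q}
  {τ τ' : P → Q}

theorem IsMHom.congr (hτ : IsMHom E F τ) (h : ∀ e ∈ E, τ e = τ' e) : IsMHom E F τ' := by
  refine ⟨fun e he => h e he ▸ hτ.1 e he, fun Z hZ => ?_⟩
  rw [← hτ.2 Z hZ]
  exact Finset.sum_congr rfl fun e he => (h e (hZ.1 he)).symm

variable [DecidableEq P]

theorem mStep_of_isCocircuit {C : Finset P} (hC : IsCocircuit E C) (b : Q) (hτ : IsMHom E F τ)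
    (hτ' : IsMHom E F τ') (h : ∀ e ∈ E, τ' e = τ e + (C : Set P).indicator (fun _ => b) e) :
    MStep E F τ τ' := by
  refine ⟨hτ, hτ', ?_⟩
  rcases eq_or_ne b 0 with rfl | hb
  · exact .inl fun e he => by simp [h e he]
  · exact .inr ⟨C, hC, fun e he => by simp [h e he, hb]⟩

variable [Module (ZMod 2) Q]

theorem MStep.exists_isCocycle (h : MStep E F τ τ') :
    ∃ C b, IsCocycle E C ∧ ∀ e ∈ E, τ' e = τ e + (C : Set P).indicator (fun _ => b) e := by
  obtain ⟨hτ, hτ', heq | ⟨C, hC, hdiff⟩⟩ := h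
  · exact ⟨∅, 0, isCocycle_empty, fun e he => by simp [heq e he]⟩
  have hσ : ∀ Z, IsCircuit E Z → ∑ e ∈ Z, (τ' e - τ e) = 0 := fun Z hZ => by
    rw [Finset.sum_sub_distrib, hτ'.2 Z hZ, hτ.2 Z hZ, sub_zero]
  have hσC : ∀ e ∈ E, τ' e - τ e ≠ 0 → e ∈ C := fun e he hne =>
    (hdiff e he).1 (sub_ne_zero.1 hne).symm
  obtain ⟨b, hb⟩ := hC.exists_eq_indicator hσ hσC
  exact ⟨C, b, hC.isCocycle, fun e he => by rw [← hb e he, add_sub_cancel]⟩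

theorem IsCocycle.mWalk {D : Finset P} (hD : IsCocycle E D) (b : Q) (hτ : IsMHom E F τ)
    (hτ' : IsMHom E F τ') (h : ∀ e ∈ E, τ' e = τ e + (D : Set P).indicator (fun _ => b) e) :
    MWalk E F τ τ' := by
  induction D using Finset.strongInduction generalizing τ with
  | H D ih =>
    rcases D.eq_empty_or_nonempty with rfl | hne
    · exact .single ⟨hτ, hτ', .inl fun e he => by simp [h e he]⟩
    obtain ⟨C, hCD, hC⟩ := hD.exists_isCocircuit_subset hne
    let σ : P → Q := fun e => τ e + (C : Set P).indicator (fun _ => b) e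
    have hσ : IsMHom E F σ := by
      refine ⟨fun e he => ?_, fun Z hZ => ?_⟩
      · by_cases heC : e ∈ C
        · simpa [σ, h e he, heC, hCD heC] using hτ'.1 e he
        · simpa [σ, heC] using hτ.1 e he
      · rw [Finset.sum_add_distrib, hτ.2 Z hZ, hC.isCocycle.sum_indicator_eq_zero hZ, add_zero]
    refine .head (mStep_of_isCocircuit hC b hτ hσ fun e _ => rfl)
      (ih _ (Finset.sdiff_ssubset hCD hC.2.1) (hD.sdiff hC.isCocycle hCD) hσ fun e he => ?_)
    rw [h e he, Finset.coe_sdiff, Set.indicator_sdiff (Finset.coe_subset.2 hCD)]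
    simp [σ]

end MatroidWalks

section GraphicMatroid

variable {V Q : Type*} [DecidableEq V] [AddCommGroup Q]

/-- `E` is the point set of the graphic matroid `M(G)`. -/
def IsGraphicPointSet (G : SimpleGraph V) (E : Finset (V → ZMod 2)) : Prop :=
  ∀ x, x ∈ E ↔ ∃ u v, G.Adj u v ∧ x = ind u + ind v

/-- The relation `τ = τ_φ` on the points of `M(G)`: the map `τ` sends each edge to the sum of the
colours which `φ` gives to its ends. Values of `τ` off `M(G)` are irrelevant. -/
def IsInducedBy (G : SimpleGraph V) (τ : (V → ZMod 2) → Q) (φ : V → Q) : Prop :=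
  ∀ u v, G.Adj u v → τ (ind u + ind v) = φ u + φ v

/-- `C` contains exactly those edges of `G` which leave the vertex set `S`. -/
def IsCut (G : SimpleGraph V) (C : Finset (V → ZMod 2)) (S : Set V) : Prop :=
  ∀ u v, G.Adj u v → (ind u + ind v ∈ C ↔ ¬(u ∈ S ↔ v ∈ S))

variable {G : SimpleGraph V} {E C : Finset (V → ZMod 2)} {S : Set V}
  {τ τ' : (V → ZMod 2) → Q} {φ : V → Q}

theorem IsGraphicPointSet.mem (hE : IsGraphicPointSet G E) {u v : V} (huv : G.Adj u v) :
    ind u + ind v ∈ E :=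
  (hE _).2 ⟨u, v, huv, rfl⟩

theorem IsInducedBy.eq_on (hE : IsGraphicPointSet G E) (hτ : IsInducedBy G τ φ)
    (hτ' : IsInducedBy G τ' φ) : ∀ e ∈ E, τ e = τ' e := fun e he => by
  obtain ⟨u, v, huv, rfl⟩ := (hE e).1 he
  rw [hτ u v huv, hτ' u v huv]

theorem IsInducedBy.congr (hE : IsGraphicPointSet G E) (hτ : IsInducedBy G τ φ)
    (h : ∀ e ∈ E, τ e = τ' e) : IsInducedBy G τ' φ := fun u v huv => by
  rw [← h _ (hE.mem huv), hτ u v huv]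

theorem IsInducedBy.sub_eq_sub [Module (ZMod 2) Q] {ψ : V → Q} (hφ : IsInducedBy G τ φ)
    (hψ : IsInducedBy G τ ψ) {u v : V} (huv : G.Adj u v) : ψ u - φ u = ψ v - φ v := by
  have hsum : ψ u + ψ v = φ u + φ v := (hψ u v huv).symm.trans (hφ u v huv)
  calc ψ u - φ u = φ v - ψ v := by rw [sub_eq_sub_iff_add_eq_add, hsum, add_comm]
    _ = ψ v - φ v := by rw [← neg_sub, ZModModule.neg_eq_self]

theorem IsCut.indicator_add_indicator [Module (ZMod 2) Q] (hCS : IsCut G C S) (b : Q) {u v : V}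
    (huv : G.Adj u v) : S.indicator (fun _ => b) u + S.indicator (fun _ => b) v =
      (C : Set (V → ZMod 2)).indicator (fun _ => b) (ind u + ind v) := by
  by_cases hu : u ∈ S <;> by_cases hv : v ∈ S <;>
    simp [hCS u v huv, hu, hv, ZModModule.add_self]

theorem IsInducedBy.add_indicator [Module (ZMod 2) Q] (hτ : IsInducedBy G τ φ)
    (hCS : IsCut G C S) (b : Q) :
    IsInducedBy G (fun e => τ e + (C : Set (V → ZMod 2)).indicator (fun _ => b) e)
      (fun u => φ u + S.indicator (fun _ => b) u) := fun u v huv => by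
  beta_reduce
  rw [hτ u v huv, ← hCS.indicator_add_indicator b huv, add_add_add_comm]

theorem exists_linearMap_ind_eq [Finite V] [Module (ZMod 2) Q] (φ : V → Q) :
    ∃ T : (V → ZMod 2) →ₗ[ZMod 2] Q, ∀ u, T (ind u) = φ u := by
  refine ⟨(Pi.basisFun (ZMod 2) V).constr ℕ φ, fun u => ?_⟩
  rw [ind, ← Pi.basisFun_apply, Module.Basis.constr_basis]

theorem exists_linearMap_isInducedBy [Finite V] [Module (ZMod 2) Q] (G : SimpleGraph V)
    (φ : V → Q) : ∃ T : (V → ZMod 2) →ₗ[ZMod 2] Q, IsInducedBy G T φ := by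
  obtain ⟨T, hT⟩ := exists_linearMap_ind_eq φ
  exact ⟨T, fun u v _ => by rw [map_add, hT, hT]⟩

variable [Fintype V]

theorem IsCocycle.exists_isCut (hE : IsGraphicPointSet G E) (hC : IsCocycle E C) :
    ∃ S, IsCut G C S := by
  obtain ⟨T, hT⟩ := exists_linearMap_eq_of_forall_isCircuit fun Z hZ =>
    hC.sum_indicator_eq_zero hZ (1 : ZMod 2)
  refine ⟨{u | T (ind u) = 1}, fun u v huv => ?_⟩
  have hadd : ∀ a b : ZMod 2, a + b = 1 ↔ ¬(a = 1 ↔ b = 1) := by decide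
  have hmem : ind u + ind v ∈ C ↔ T (ind u + ind v) = 1 := by
    simp [hT _ (hE.mem huv)]
  rw [hmem, map_add]
  exact hadd _ _

theorem IsGraphicPointSet.exists_isCocycle_isCut (hE : IsGraphicPointSet G E)
    (S : Set V) : ∃ C, IsCocycle E C ∧ IsCut G C S := by
  obtain ⟨T, hT⟩ := exists_linearMap_ind_eq (S.indicator (1 : V → ZMod 2))
  refine ⟨_, isCocycle_filter_ne_zero fun Z hZ => hZ.sum_map_eq_zero T, fun u v huv => ?_⟩
  by_cases hu : u ∈ S <;> by_cases hv : v ∈ S <;>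
    simp [hE.mem huv, hT, hu, hv, ZModModule.add_self]

end GraphicMatroid

section KempeChains

variable {V Q : Type*} [AddCommGroup Q] {G : SimpleGraph V} {f : V → Q} {b : Q} {U : Set V}

/-- The Kempe chain through `u` in the colours `f u` and `f u + b`. -/
def kempeChain (G : SimpleGraph V) (f : V → Q) (b : Q) (u : V) : Set V :=
  Subtype.val '' {x | (G.induce {v | f v = f u ∨ f v = f u + b}).connectedComponentMk x =
    (G.induce {v | f v = f u ∨ f v = f u + b}).connectedComponentMk ⟨u, Or.inl rfl⟩}

/-- `U` is closed under following edges along which the colour changes by `b`, i.e. `U` is a union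
of Kempe chains. This is what makes adding `b` on `U` preserve proper colourings. -/
def IsKempeClosed (G : SimpleGraph V) (f : V → Q) (b : Q) (U : Set V) : Prop :=
  ∀ ⦃x y⦄, G.Adj x y → x ∈ U → f y = f x + b → y ∈ U

theorem mem_kempeChain_self (u : V) : u ∈ kempeChain G f b u :=
  ⟨⟨u, Or.inl rfl⟩, rfl, rfl⟩

theorem isKempeClosed_of_add_indicator
    (h : ∀ ⦃x y⦄, G.Adj x y →
      f x + U.indicator (fun _ => b) x ≠ f y + U.indicator (fun _ => b) y) :
    IsKempeClosed G f b U := fun x y hxy hx hy => by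
  by_contra hyU
  exact h hxy (by simp [hx, hyU, hy])

theorem IsKempeClosed.add_indicator_ne (hU : IsKempeClosed G f b U)
    (hf : ∀ ⦃x y⦄, G.Adj x y → f x ≠ f y) ⦃x y : V⦄ (hxy : G.Adj x y) :
    f x + U.indicator (fun _ => b) x ≠ f y + U.indicator (fun _ => b) y := by
  by_cases hx : x ∈ U <;> by_cases hy : y ∈ U
  · simpa [hx, hy] using hf hxy
  · simpa [hx, hy] using fun h : f x + b = f y => hy (hU hxy hx h.symm)
  · simpa [hx, hy] using fun h : f x = f y + b => hx (hU hxy.symm hy h)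
  · simpa [hx, hy] using hf hxy

variable [Module (ZMod 2) Q]

theorem add_add_self_cancel (x b : Q) : x + b + b = x := by
  rw [add_assoc, ZModModule.add_self, add_zero]

theorem isKempeClosed_kempeChain (u : V) : IsKempeClosed G f b (kempeChain G f b u) := by
  rintro _ y hxy ⟨x, hx, rfl⟩ hy
  have hyu : f y = f u ∨ f y = f u + b := by
    rcases x.2 with h | h
    · exact .inr (by rw [hy, h])
    · exact .inl (by rw [hy, h, add_add_self_cancel])
  have hadj : (G.induce {v | f v = f u ∨ f v = f u + b}).Adj ⟨y, hyu⟩ x := hxy.symm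
  exact ⟨⟨y, hyu⟩, (SimpleGraph.ConnectedComponent.sound hadj.reachable).trans hx, rfl⟩

theorem IsKempeClosed.kempeChain_subset (hU : IsKempeClosed G f b U)
    (hf : ∀ ⦃x y⦄, G.Adj x y → f x ≠ f y) {u : V} (hu : u ∈ U) : kempeChain G f b u ⊆ U := by
  rintro _ ⟨x, hx, rfl⟩
  obtain ⟨p⟩ := SimpleGraph.ConnectedComponent.exact hx.symm
  by_contra hxU
  obtain ⟨d, -, hfst, hsnd⟩ := p.exists_boundary_dart {x | x.1 ∈ U} hu hxU
  have hd : G.Adj d.fst.1 d.snd.1 := d.adj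
  refine hsnd (hU hd hfst ?_)
  rcases d.fst.2 with h₁ | h₁ <;> rcases d.snd.2 with h₂ | h₂
  · exact absurd (h₁.trans h₂.symm) (hf hd)
  · rw [h₁, h₂]
  · rw [h₁, h₂, add_add_self_cancel]
  · exact absurd (h₁.trans h₂.symm) (hf hd)

end KempeChains

section KempeWalks

variable {V : Type*} {t : ℕ} {F : Finset (Fin t → ZMod 2)} {G : SimpleGraph V}
  {φ ψ : G →g decisionGraph F}

theorem decisionGraph_adj_iff_ne (hF : ∀ x, x ≠ 0 → x ∈ F) {x y : Fin t → ZMod 2} :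
    (decisionGraph F).Adj x y ↔ x ≠ y := by
  refine ⟨fun h => h.2, fun h => ⟨hF _ ?_, h⟩⟩
  rwa [← ZModModule.sub_eq_add, sub_ne_zero]

theorem KempeAdj.exists_eq_add_indicator (h : KempeAdj φ ψ) :
    ∃ (b : Fin t → ZMod 2) (U : Set V), ∀ u, ψ u = φ u + U.indicator (fun _ => b) u := by
  obtain ⟨b, -, U, -, hU, hU'⟩ := h
  refine ⟨b, U, fun u => ?_⟩
  by_cases hu : u ∈ U
  · simp [hu, hU u hu]
  · simp [hu, hU' u hu]

theorem IsKempeClosed.exists_hom (hF : ∀ x, x ≠ 0 → x ∈ F) {b : Fin t → ZMod 2} {U : Set V}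
    (hU : IsKempeClosed G φ b U) :
    ∃ χ : G →g decisionGraph F, ∀ u, χ u = φ u + U.indicator (fun _ => b) u := by
  refine ⟨⟨fun u => φ u + U.indicator (fun _ => b) u, fun {x y} hxy => ?_⟩, fun u => rfl⟩
  have hne := hU.add_indicator_ne (fun _ _ h => (φ.map_adj h).ne) hxy
  exact (decisionGraph_adj_iff_ne hF).2 hne

theorem kempeAdj_of_eq_add_indicator_kempeChain {b : Fin t → ZMod 2} {u : V}
    (h : ∀ v, ψ v = φ v + (kempeChain G φ b u).indicator (fun _ => b) v) : KempeAdj φ ψ :=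
  ⟨b, φ u, kempeChain G φ b u, ⟨_, rfl⟩, fun v hv => by simp [h v, hv],
    fun v hv => by simp [h v, hv]⟩

theorem reflTransGen_kempeAdj_of_eq_add_indicator (hF : ∀ x, x ≠ 0 → x ∈ F) {U : Set V}
    (hfin : U.Finite) (b : Fin t → ZMod 2) (h : ∀ u, ψ u = φ u + U.indicator (fun _ => b) u) :
    Relation.ReflTransGen KempeAdj φ ψ := by
  induction hn : U.ncard using Nat.strong_induction_on generalizing U φ with
  | _ n ih =>
    subst hn
    rcases U.eq_empty_or_nonempty with rfl | ⟨u, hu⟩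
    · obtain rfl : ψ = φ := by
        ext1 v
        simpa using h v
      exact .refl
    have hclosed : IsKempeClosed G φ b U :=
      isKempeClosed_of_add_indicator fun x y hxy => by
        rw [← h, ← h]
        exact (ψ.map_adj hxy).ne
    have hsub : kempeChain G φ b u ⊆ U :=
      hclosed.kempeChain_subset (fun _ _ hxy => (φ.map_adj hxy).ne) hu
    obtain ⟨χ, hχ⟩ := (isKempeClosed_kempeChain (G := G) (f := φ) (b := b) u).exists_hom hF
    refine .head (kempeAdj_of_eq_add_indicator_kempeChain hχ)
      (ih _ ?_ (hfin.sdiff (t := kempeChain G φ b u)) (fun v => ?_) rfl)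
    · exact Set.ncard_lt_ncard (hsub.sdiff_ssubset_of_nonempty ⟨u, mem_kempeChain_self u⟩) hfin
    · rw [h, hχ, Set.indicator_sdiff hsub]
      simp

end KempeWalks

section Correspondence

variable {V : Type*} [DecidableEq V] {t : ℕ} {F : Finset (Fin t → ZMod 2)}
  {G : SimpleGraph V} {E : Finset (V → ZMod 2)} {φ ψ : G →g decisionGraph F}
  {τ τ' : (V → ZMod 2) → (Fin t → ZMod 2)}

theorem IsMHom.exists_hom_of_isInducedBy (hF₀ : 0 ∉ F) (hE : IsGraphicPointSet G E)
    (hτ : IsMHom E F τ) {f : V → Fin t → ZMod 2} (hf : IsInducedBy G τ f) :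
    ∃ χ : G →g decisionGraph F, ⇑χ = f := by
  refine ⟨⟨f, fun {u v} huv => ?_⟩, rfl⟩
  have hmem : f u + f v ∈ F := hf u v huv ▸ hτ.1 _ (hE.mem huv)
  refine ⟨hmem, fun heq => hF₀ ?_⟩
  rwa [heq, ZModModule.add_self] at hmem

/-- The difference `ψ - φ` is constant on connected components, so its level sets can be corrected
one at a time. -/
theorem reflTransGen_kempeAdj_of_isInducedBy [Finite V] (hF : ∀ x, x ≠ 0 → x ∈ F)
    (hφ : IsInducedBy G τ φ) (hψ : IsInducedBy G τ ψ) : Relation.ReflTransGen KempeAdj φ ψ := by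
  induction hn : {u | φ u ≠ ψ u}.ncard using Nat.strong_induction_on generalizing φ with
  | _ n ih =>
    subst hn
    rcases {u | φ u ≠ ψ u}.eq_empty_or_nonempty with hempty | ⟨u, hu⟩
    · obtain rfl : φ = ψ := by
        ext1 v
        simpa using Set.eq_empty_iff_forall_notMem.1 hempty v
      exact .refl
    let b := ψ u - φ u
    let U : Set V := {v | ψ v - φ v = b}
    have hU : ∀ x y, G.Adj x y → (x ∈ U ↔ y ∈ U) := fun x y hxy => by
      simp only [U, Set.mem_ofPred_eq, hφ.sub_eq_sub hψ hxy]
    have hclosed : IsKempeClosed G φ b U := fun x y hxy hx _ => (hU x y hxy).1 hx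
    have hcut : IsCut G ∅ U := fun x y hxy => by simp [hU x y hxy]
    obtain ⟨χ, hχ⟩ := hclosed.exists_hom hF
    have hτχ : IsInducedBy G τ χ := by
      simpa [← hχ] using hφ.add_indicator hcut b
    have hχ_mem : ∀ v ∈ U, χ v = ψ v := fun v hv => by
      rw [hχ, Set.indicator_of_mem hv, ← show ψ v - φ v = b from hv, add_sub_cancel]
    have hχ_notMem : ∀ v ∉ U, χ v = φ v := fun v hv => by
      rw [hχ, Set.indicator_of_notMem hv, add_zero]
    have hlt : {v | χ v ≠ ψ v} ⊂ {v | φ v ≠ ψ v} := by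
      refine (Set.ssubset_iff_of_subset fun v hv => ?_).2 ⟨u, hu, fun h => h (hχ_mem u rfl)⟩
      rwa [Set.mem_ofPred_eq, ← hχ_notMem v fun hvU => hv (hχ_mem v hvU)]
    exact (reflTransGen_kempeAdj_of_eq_add_indicator hF U.toFinite b hχ).trans
      (ih _ (Set.ncard_lt_ncard hlt) hτχ rfl)

theorem IsInducedBy.isMHom [Finite V] (hE : IsGraphicPointSet G E) (hτ : IsInducedBy G τ φ) :
    IsMHom E F τ := by
  obtain ⟨T, hT⟩ := exists_linearMap_isInducedBy G φ
  have hTF : IsMHom E F T := by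
    refine ⟨fun e he => ?_, fun Z hZ => hZ.sum_map_eq_zero T⟩
    obtain ⟨u, v, huv, rfl⟩ := (hE e).1 he
    rw [hT u v huv]
    exact (φ.map_adj huv).1
  exact hTF.congr (hT.eq_on hE hτ)

variable [Fintype V]

theorem mWalk_of_kempeAdj (hE : IsGraphicPointSet G E) (hτ : IsInducedBy G τ φ)
    (hτ' : IsInducedBy G τ' ψ) (h : KempeAdj φ ψ) : MWalk E F τ τ' := by
  obtain ⟨b, U, hU⟩ := h.exists_eq_add_indicator
  obtain ⟨C, hC, hCU⟩ := hE.exists_isCocycle_isCut U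
  have hψ : IsInducedBy G (fun e => τ e + (C : Set (V → ZMod 2)).indicator (fun _ => b) e) ψ := by
    rw [show (ψ : V → Fin t → ZMod 2) = _ from funext hU]
    exact hτ.add_indicator hCU b
  exact hC.mWalk b (hτ.isMHom hE) (hτ'.isMHom hE) (hτ'.eq_on hE hψ)

theorem mWalk_of_reflTransGen_kempeAdj (hE : IsGraphicPointSet G E) (hτ : IsInducedBy G τ φ)
    (hτ' : IsInducedBy G τ' ψ) (h : Relation.ReflTransGen KempeAdj φ ψ) : MWalk E F τ τ' := by
  induction h generalizing τ' with
  | refl => exact .single ⟨hτ.isMHom hE, hτ'.isMHom hE, .inl (hτ.eq_on hE hτ')⟩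
  | @tail χ ψ _ hadj ih =>
    obtain ⟨T, hT⟩ := exists_linearMap_isInducedBy G χ
    exact (ih hT).trans (mWalk_of_kempeAdj hE hT hτ' hadj)

theorem MStep.exists_reflTransGen_kempeAdj (hF : ∀ x, x ∈ F ↔ x ≠ 0)
    (hE : IsGraphicPointSet G E) (hτ : IsInducedBy G τ φ) (h : MStep E F τ τ') :
    ∃ χ : G →g decisionGraph F, IsInducedBy G τ' χ ∧ Relation.ReflTransGen KempeAdj φ χ := by
  obtain ⟨C, b, hC, hdiff⟩ := h.exists_isCocycle
  obtain ⟨S, hCS⟩ := hC.exists_isCut hE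
  have hτ' := (hτ.add_indicator hCS b).congr hE fun e he => (hdiff e he).symm
  obtain ⟨χ, hχ⟩ := h.2.1.exists_hom_of_isInducedBy (by simp [hF]) hE hτ'
  exact ⟨χ, hχ ▸ hτ', reflTransGen_kempeAdj_of_eq_add_indicator (fun x => (hF x).2) S.toFinite b
    (congrFun hχ)⟩

theorem MWalk.exists_reflTransGen_kempeAdj (hF : ∀ x, x ∈ F ↔ x ≠ 0)
    (hE : IsGraphicPointSet G E) (hτ : IsInducedBy G τ φ) (h : MWalk E F τ τ') :
    ∃ χ : G →g decisionGraph F, IsInducedBy G τ' χ ∧ Relation.ReflTransGen KempeAdj φ χ := by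
  induction h with
  | refl => exact ⟨φ, hτ, .refl⟩
  | tail _ hstep ih =>
    obtain ⟨χ, hχ, hφχ⟩ := ih
    obtain ⟨χ', hχ', hχχ'⟩ := hstep.exists_reflTransGen_kempeAdj hF hE hχ
    exact ⟨χ', hχ', hφχ.trans hχχ'⟩

end Correspondence

theorem stmt14_general {V : Type*} [Fintype V] [DecidableEq V] {t : ℕ}
    {F : Finset (Fin t → ZMod 2)} (hF : ∀ x, x ∈ F ↔ x ≠ 0) {G : SimpleGraph V}
    {EG : Finset (V → ZMod 2)} (hEG : IsGraphicPointSet G EG) {φ ψ : G →g decisionGraph F}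
    {τφ τψ : (V → ZMod 2) → (Fin t → ZMod 2)} (hτφ : IsInducedBy G τφ φ)
    (hτψ : IsInducedBy G τψ ψ) :
    MWalk EG F τφ τψ ↔ Relation.ReflTransGen KempeAdj φ ψ := by
  refine ⟨fun hwalk => ?_, mWalk_of_reflTransGen_kempeAdj hEG hτφ hτψ⟩
  obtain ⟨χ, hχ, hφχ⟩ := hwalk.exists_reflTransGen_kempeAdj hF hEG hτφ
  exact hφχ.trans (reflTransGen_kempeAdj_of_isInducedBy (fun x => (hF x).2) hχ hτψ)

theorem stmt14 {V : Type*} [Fintype V] [DecidableEq V] (t : ℕ) (ht : 2 ≤ t)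
    (F : Finset (Fin t → ZMod 2)) (hF : ∀ x, x ∈ F ↔ x ≠ 0)
    (G : SimpleGraph V) (hG : G.Connected) (v₀ : V)
    (EG : Finset (V → ZMod 2))
    (hEG : ∀ x, x ∈ EG ↔ ∃ u v, G.Adj u v ∧ x = ind u + ind v)
    (φ ψ : G →g decisionGraph F) (hφ : φ v₀ = 0) (hψ : ψ v₀ = 0)
    (τφ τψ : (V → ZMod 2) → (Fin t → ZMod 2))
    (hτφ : ∀ u v, G.Adj u v → τφ (ind u + ind v) = φ u + φ v)
    (hτψ : ∀ u v, G.Adj u v → τψ (ind u + ind v) = ψ u + ψ v) :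
    MWalk EG F τφ τψ ↔ Relation.ReflTransGen KempeAdj φ ψ :=
  stmt14_general hF hEG hτφ hτψ
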